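/- Let h : ℝ → ℝ be differentiable, strictly convex, and monotone increasing, let 𝒰 ⊆ ℝ be compact, and let u be an interior point of 𝒰. Then the set { z ∈ [0, ∞) : −h(a) + z·a ≤ −h(u) + z·u for all a ∈ 𝒰 } equals the singleton { h'(u) }. In particular, the minimal incentive-compatible sensitivity θ(u) := min{ z ≥ 0 : u ∈ argmax_{a ∈ 𝒰} (−h(a) + z·a) } exists and equals h'(u). -/

import Mathlib

/-!
Optimality of `u` for `a ↦ -h a + z a` on `U` is the subgradient inequality
`h u + z (a - u) ≤ h a` for all `a ∈ U`. Convexity makes the derivative of `h` at `u` such a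
subgradient, and Fermat's rule at the interior point `u` leaves no other. Monotonicity of `h`
makes this derivative nonnegative.
-/

open scoped Topology

section LineDerivative

variable {E : Type*} [AddCommGroup E] [Module ℝ E] {h : E → ℝ} {d : ℝ}

theorem add_le_of_convexOn_of_hasLineDerivAt {s : Set E} {u a : E} (hconv : ConvexOn ℝ s h)
    (hu : u ∈ s) (ha : a ∈ s) (hd : HasLineDerivAt ℝ h d u (a - u)) : h u + d ≤ h a := by
  have hline := hconv.comp_affineMap (AffineMap.lineMap u a : ℝ →ᵃ[ℝ] E)
  have hderiv : HasDerivAt (h ∘ AffineMap.lineMap u a) d (0 : ℝ) := by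
    simpa only [HasLineDerivAt, Function.comp_def, AffineMap.lineMap_apply_module', add_comm u]
      using hd
  have hslope : d ≤ slope (h ∘ AffineMap.lineMap u a) (0 : ℝ) 1 :=
    hline.le_slope_of_hasDerivAt (by simpa using hu) (by simpa using ha) zero_lt_one hderiv
  simp only [slope_def_field, Function.comp_apply, AffineMap.lineMap_apply_zero,
    AffineMap.lineMap_apply_one, sub_zero, div_one] at hslope
  linarith

theorem hasLineDerivAt_nonneg_of_monotoneOn [TopologicalSpace E] [ContinuousAdd E]
    [ContinuousSMul ℝ E] [PartialOrder E] [IsOrderedAddMonoid E] [SMulPosMono ℝ E]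
    {U : Set E} {u v : E} (hmono : MonotoneOn h U) (hU : U ∈ 𝓝 u) (hv : 0 ≤ v)
    (hd : HasLineDerivAt ℝ h d u v) : 0 ≤ d := by
  have hline : Monotone fun t : ℝ => u + t • v := fun t t' htt' =>
    add_le_add_right (smul_le_smul_of_nonneg_right htt' hv) u
  have hcont : Continuous fun t : ℝ => u + t • v := by fun_prop
  have hnhds : (fun t : ℝ => u + t • v) ⁻¹' U ∈ 𝓝 0 :=
    hcont.continuousAt.preimage_mem_nhds (by simpa using hU)
  exact HasDerivWithinAt.nonneg_of_monotoneOn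
    (uniqueDiffWithinAt_iff_accPt.1 (uniqueDiffWithinAt_of_mem_nhds hnhds))
    (hd.hasLineDerivWithinAt U) fun t ht t' ht' htt' => hmono ht ht' (hline htt')

end LineDerivative

section NormedSpace

variable {E : Type*} [NormedAddCommGroup E] [NormedSpace ℝ E]
  {h : E → ℝ} {h' z : E →L[ℝ] ℝ} {s U : Set E} {u : E}

theorem eq_of_isLocalMax_neg_add_of_hasFDerivAt (hd : HasFDerivAt h h' u)
    (hmax : IsLocalMax (fun a => -h a + z a) u) : z = h' := by
  have hcrit : -h' + z = 0 := hmax.hasFDerivAt_eq_zero (hd.fun_neg.add z.hasFDerivAt)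
  exact (neg_add_eq_zero.1 hcrit).symm

theorem forall_neg_add_le_iff_eq_of_hasFDerivAt (hconv : ConvexOn ℝ s h) (hUs : U ⊆ s)
    (hu : u ∈ interior U) (hd : HasFDerivAt h h' u) :
    (∀ a ∈ U, -h a + z a ≤ -h u + z u) ↔ z = h' := by
  constructor
  · intro hmax
    exact eq_of_isLocalMax_neg_add_of_hasFDerivAt hd
      (Filter.mem_of_superset (mem_interior_iff_mem_nhds.1 hu) hmax)
  · rintro rfl a ha
    have htangent : h u + z (a - u) ≤ h a := add_le_of_convexOn_of_hasLineDerivAt hconv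
      (hUs (interior_subset hu)) (hUs ha) (hd.hasLineDerivAt (a - u))
    rw [map_sub] at htangent
    linarith

theorem stmt_6_general [PartialOrder E] [IsOrderedAddMonoid E] [SMulPosMono ℝ E]
    (hconv : ConvexOn ℝ s h) (hUs : U ⊆ s) (hmono : MonotoneOn h U)
    (hu : u ∈ interior U) (hd : HasFDerivAt h h' u) :
    {z : E →L[ℝ] ℝ | (∀ v, 0 ≤ v → 0 ≤ z v) ∧ ∀ a ∈ U, -h a + z a ≤ -h u + z u} = {h'} := by
  have hpos (v : E) (hv : 0 ≤ v) : 0 ≤ h' v :=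
    hasLineDerivAt_nonneg_of_monotoneOn hmono (mem_interior_iff_mem_nhds.1 hu) hv
      (hd.hasLineDerivAt v)
  ext z
  simp only [Set.mem_ofPred_eq, Set.mem_singleton_iff,
    forall_neg_add_le_iff_eq_of_hasFDerivAt hconv hUs hu hd, and_iff_right_iff_imp]
  rintro rfl
  exact hpos

end NormedSpace

theorem setOf_nonneg_forall_neg_add_mul_le_eq_singleton {h : ℝ → ℝ} {s U : Set ℝ} {u d : ℝ}
    (hconv : ConvexOn ℝ s h) (hUs : U ⊆ s) (hmono : MonotoneOn h U) (hu : u ∈ interior U)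
    (hd : HasDerivAt h d u) :
    {z : ℝ | 0 ≤ z ∧ ∀ a ∈ U, -h a + z * a ≤ -h u + z * u} = {d} := by
  have hpos (z : ℝ) : (∀ v, 0 ≤ v → 0 ≤ v * z) ↔ 0 ≤ z :=
    ⟨fun hz => by simpa using hz 1 zero_le_one, fun hz v hv => mul_nonneg hv hz⟩
  ext z
  simpa [hpos, mul_comm z] using
    Set.ext_iff.1 (stmt_6_general hconv hUs hmono hu hd.hasFDerivAt) (.toSpanSingleton ℝ z)

/-- For a differentiable, strictly convex, monotone increasing cost `h` and an
interior point `u` of the compact feasible set `𝒰`, the set of nonnegative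
sensitivities making `u` incentive compatible is exactly `{h'(u)}`; in
particular the minimal incentive-compatible sensitivity `θ(u)` exists and
equals `h'(u)`. -/
theorem stmt_6
    (h : ℝ → ℝ) (hdiff : Differentiable ℝ h)
    (hconv : StrictConvexOn ℝ Set.univ h) (hmono : Monotone h)
    (U : Set ℝ) (hU : IsCompact U) (u : ℝ) (hu : u ∈ interior U) :
    {z : ℝ | 0 ≤ z ∧ ∀ a ∈ U, -h a + z * a ≤ -h u + z * u} = {deriv h u} ∧
      IsLeast {z : ℝ | 0 ≤ z ∧ ∀ a ∈ U, -h a + z * a ≤ -h u + z * u}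
        (deriv h u) := by
  rw [setOf_nonneg_forall_neg_add_mul_le_eq_singleton hconv.convexOn (Set.subset_univ U)
    (hmono.monotoneOn U) hu (hdiff u).hasDerivAt]
  exact ⟨rfl, isLeast_singleton⟩
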